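/- For a two-sided coherent ring R the following are equivalent: (1) R is a left FGF-ring; (2) the left module _RR is noetherian and _RR is an FP-cogenerator; (3) the left module _RR is noetherian and the right module R_R is FP-injective; (4) R is left noetherian, a left Kasch ring, and the injective hull E(_RR) of the left module _RR is flat. -/

import Mathlib

/-!
Common definitions: rings are associative with identity, not necessarily commutative.
Left `R`-modules are `Module R M`; right `R`-modules are `Module Rᵐᵒᵖ M`.
-/

universe u

open MulOpposite Function Pointwise

section Defs

variable (R : Type u) [Ring R]

/-- Defining relations of the tensor product `K ⊗_R M` of a right `R`-module `K`
and a left `R`-module `M`, inside the free abelian group on `K × M`. -/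
def TensorRels (K M : Type u) [AddCommGroup K] [Module Rᵐᵒᵖ K]
    [AddCommGroup M] [Module R M] : AddSubgroup (FreeAbelianGroup (K × M)) :=
  AddSubgroup.closure
    ({x | ∃ k₁ k₂ m, x = FreeAbelianGroup.of (k₁ + k₂, m) - FreeAbelianGroup.of (k₁, m) -
        FreeAbelianGroup.of (k₂, m)} ∪
     {x | ∃ k m₁ m₂, x = FreeAbelianGroup.of (k, m₁ + m₂) - FreeAbelianGroup.of (k, m₁) -
        FreeAbelianGroup.of (k, m₂)} ∪
     {x | ∃ (r : R) (k : K) (m : M),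
        x = FreeAbelianGroup.of (op r • k, m) - FreeAbelianGroup.of (k, r • m)})

/-- The tensor product `K ⊗_R M` of a right `R`-module `K` and a left `R`-module `M`
over the (not necessarily commutative) ring `R`, as an abelian group. -/
def NCTensor (K M : Type u) [AddCommGroup K] [Module Rᵐᵒᵖ K]
    [AddCommGroup M] [Module R M] : Type u :=
  FreeAbelianGroup (K × M) ⧸ TensorRels R K M

instance (K M : Type u) [AddCommGroup K] [Module Rᵐᵒᵖ K] [AddCommGroup M] [Module R M] :
    AddCommGroup (NCTensor R K M) :=
  QuotientAddGroup.Quotient.addCommGroup _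

/-- The map `μ ⊗ ν : K ⊗_R M → K' ⊗_R M'` induced by a map `μ` of right `R`-modules
and a map `ν` of left `R`-modules. -/
def tensorCongr {K K' M M' : Type u} [AddCommGroup K] [Module Rᵐᵒᵖ K]
    [AddCommGroup K'] [Module Rᵐᵒᵖ K'] [AddCommGroup M] [Module R M]
    [AddCommGroup M'] [Module R M'] (μ : K →ₗ[Rᵐᵒᵖ] K') (ν : M →ₗ[R] M') :
    NCTensor R K M →+ NCTensor R K' M' :=
  QuotientAddGroup.map (TensorRels R K M) (TensorRels R K' M')
    (FreeAbelianGroup.lift fun p : K × M => FreeAbelianGroup.of (μ p.1, ν p.2))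
    (by
      refine (AddSubgroup.closure_le _).2 ?_
      rintro x ((⟨k₁, k₂, m, rfl⟩ | ⟨k, m₁, m₂, rfl⟩) | ⟨r, k, m, rfl⟩) <;>
        refine AddSubgroup.mem_comap.2 (AddSubgroup.subset_closure ?_)
      · exact Or.inl <| Or.inl ⟨μ k₁, μ k₂, ν m, by simp [map_add]⟩
      · exact Or.inl <| Or.inr ⟨μ k, ν m₁, ν m₂, by simp [map_add]⟩
      · exact Or.inr ⟨r, μ k, ν m, by simp [map_smul]⟩)

/-- A left `R`-module `M` is flat if `μ ⊗ M` is injective for every injective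
homomorphism `μ` of right `R`-modules. -/
def ModFlat (M : Type u) [AddCommGroup M] [Module R M] : Prop :=
  ∀ (K L : Type u) [AddCommGroup K] [Module Rᵐᵒᵖ K] [AddCommGroup L] [Module Rᵐᵒᵖ L]
    (μ : K →ₗ[Rᵐᵒᵖ] L), Injective μ →
      Injective (tensorCongr R μ (LinearMap.id : M →ₗ[R] M))

/-- A right `R`-module `M` is flat if `M ⊗ μ` is injective for every injective
homomorphism `μ` of left `R`-modules. -/
def ModFlatRight (M : Type u) [AddCommGroup M] [Module Rᵐᵒᵖ M] : Prop :=
  ∀ (K L : Type u) [AddCommGroup K] [Module R K] [AddCommGroup L] [Module R L]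
    (μ : K →ₗ[R] L), Injective μ →
      Injective (tensorCongr R (LinearMap.id : M →ₗ[Rᵐᵒᵖ] M) μ)

/-- A left `R`-module `M` is fp-flat if `μ ⊗ M` is injective for every injective
homomorphism `μ` of finitely presented right `R`-modules. -/
def FpFlat (M : Type u) [AddCommGroup M] [Module R M] : Prop :=
  ∀ (K L : Type u) [AddCommGroup K] [Module Rᵐᵒᵖ K] [AddCommGroup L] [Module Rᵐᵒᵖ L],
    Module.FinitePresentation Rᵐᵒᵖ K → Module.FinitePresentation Rᵐᵒᵖ L →
    ∀ (μ : K →ₗ[Rᵐᵒᵖ] L), Injective μ →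
      Injective (tensorCongr R μ (LinearMap.id : M →ₗ[R] M))

/-- A right `R`-module `M` is fp-flat if `M ⊗ μ` is injective for every injective
homomorphism `μ` of finitely presented left `R`-modules. -/
def FpFlatRight (M : Type u) [AddCommGroup M] [Module Rᵐᵒᵖ M] : Prop :=
  ∀ (K L : Type u) [AddCommGroup K] [Module R K] [AddCommGroup L] [Module R L],
    Module.FinitePresentation R K → Module.FinitePresentation R L →
    ∀ (μ : K →ₗ[R] L), Injective μ →
      Injective (tensorCongr R (LinearMap.id : M →ₗ[Rᵐᵒᵖ] M) μ)

/-- `Ext¹_R(F, M) = 0`. -/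
def ExtVanish (F M : Type u) [AddCommGroup F] [Module R F] [AddCommGroup M] [Module R M] :
    Prop :=
  Subsingleton
    (((Ext ℤ (ModuleCat.{u} R) 1).obj (Opposite.op (ModuleCat.of R F))).obj (ModuleCat.of R M))

/-- A left `R`-module `M` is FP-injective (absolutely pure) if `Ext¹_R(F, M) = 0` for
every finitely presented left `R`-module `F`. -/
def FPInjective (M : Type u) [AddCommGroup M] [Module R M] : Prop :=
  ∀ (F : Type u) [AddCommGroup F] [Module R F], Module.FinitePresentation R F → ExtVanish R F M

/-- A left `R`-module `M` is fp-injective if for every injective homomorphism `μ : K → L`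
of finitely presented left `R`-modules, the induced map `Hom(L, M) → Hom(K, M)` is
surjective. -/
def FpInjective (M : Type u) [AddCommGroup M] [Module R M] : Prop :=
  ∀ (K L : Type u) [AddCommGroup K] [Module R K] [AddCommGroup L] [Module R L],
    Module.FinitePresentation R K → Module.FinitePresentation R L →
    ∀ (μ : K →ₗ[R] L), Injective μ → ∀ f : K →ₗ[R] M, ∃ g : L →ₗ[R] M, g ∘ₗ μ = f

/-- A left `R`-module `K` is an FP-cogenerator if for every nonzero homomorphism
`f : M → N` from a finitely generated module `M` to a finitely presented module `N`
there is `g : N → K` with `g ∘ f ≠ 0`. -/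
def IsFPCogenerator (K : Type u) [AddCommGroup K] [Module R K] : Prop :=
  ∀ (M N : Type u) [AddCommGroup M] [Module R M] [AddCommGroup N] [Module R N],
    Module.Finite R M → Module.FinitePresentation R N →
    ∀ f : M →ₗ[R] N, f ≠ 0 → ∃ g : N →ₗ[R] K, g ∘ₗ f ≠ 0

/-- A left `R`-module `K` is a cogenerator if for every nonzero homomorphism `f : M → N`
of left `R`-modules there is `g : N → K` with `g ∘ f ≠ 0`. -/
def IsCogenerator (K : Type u) [AddCommGroup K] [Module R K] : Prop :=
  ∀ (M N : Type u) [AddCommGroup M] [Module R M] [AddCommGroup N] [Module R N],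
    ∀ f : M →ₗ[R] N, f ≠ 0 → ∃ g : N →ₗ[R] K, g ∘ₗ f ≠ 0

/-- The canonical evaluation map `M → M** = Hom(Hom(M, R), R)` for a left `R`-module `M`;
here `M* = Hom_R(M, R)` is a right `R`-module. -/
def dualEval (M : Type u) [AddCommGroup M] [Module R M] :
    M →ₗ[R] ((M →ₗ[R] R) →ₗ[Rᵐᵒᵖ] R) where
  toFun m :=
    { toFun := fun f => f m
      map_add' := fun f g => rfl
      map_smul' := fun r f => rfl }
  map_add' m m' := LinearMap.ext fun f => f.map_add m m'
  map_smul' r m := LinearMap.ext fun f => by simp [f.map_smul]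

/-- The canonical evaluation map `M → M** = Hom(Hom(M, R), R)` for a right `R`-module `M`;
here `M* = Hom_R(M, R)` is a left `R`-module. -/
def dualEvalRight (M : Type u) [AddCommGroup M] [Module Rᵐᵒᵖ M] :
    M →ₗ[Rᵐᵒᵖ] ((M →ₗ[Rᵐᵒᵖ] R) →ₗ[R] R) where
  toFun m :=
    { toFun := fun f => f m
      map_add' := fun f g => rfl
      map_smul' := fun r f => rfl }
  map_add' m m' := LinearMap.ext fun f => f.map_add m m'
  map_smul' r m := LinearMap.ext fun f => by simp [f.map_smul]

/-- The left annihilator of a subset `X ⊆ R`. -/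
def lAnn (X : Set R) : Set R := {a | ∀ x ∈ X, a * x = 0}

/-- The right annihilator of a subset `X ⊆ R`. -/
def rAnn (X : Set R) : Set R := {a | ∀ x ∈ X, x * a = 0}

/-- `R` is left coherent: every finitely generated left ideal is finitely presented. -/
def LeftCoherent : Prop :=
  ∀ I : Submodule R R, I.FG → Module.FinitePresentation R I

/-- `R` is right coherent: every finitely generated right ideal is finitely presented. -/
def RightCoherent : Prop :=
  ∀ I : Submodule Rᵐᵒᵖ R, I.FG → Module.FinitePresentation Rᵐᵒᵖ I

/-- A left `R`-module `M` embeds in a free left `R`-module. -/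
def EmbedsInFree (M : Type u) [AddCommGroup M] [Module R M] : Prop :=
  ∃ (ι : Type u) (f : M →ₗ[R] (ι →₀ R)), Injective f

/-- A right `R`-module `M` embeds in a free right `R`-module. -/
def EmbedsInFreeRight (M : Type u) [AddCommGroup M] [Module Rᵐᵒᵖ M] : Prop :=
  ∃ (ι : Type u) (f : M →ₗ[Rᵐᵒᵖ] (ι →₀ R)), Injective f

/-- `R` is a left IF-ring: every finitely presented left `R`-module embeds in a free module. -/
def LeftIF : Prop :=
  ∀ (M : Type u) [AddCommGroup M] [Module R M],
    Module.FinitePresentation R M → EmbedsInFree R M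

/-- `R` is a right IF-ring: every finitely presented right `R`-module embeds in a free module. -/
def RightIF : Prop :=
  ∀ (M : Type u) [AddCommGroup M] [Module Rᵐᵒᵖ M],
    Module.FinitePresentation Rᵐᵒᵖ M → EmbedsInFreeRight R M

/-- A module is cyclic if it is generated by one element. -/
def CyclicModule (M : Type u) [AddCommGroup M] [Module R M] : Prop :=
  ∃ m : M, Submodule.span R {m} = ⊤

/-- `R` is a left CF-ring: every cyclic left `R`-module embeds in a free module. -/
def LeftCF : Prop :=
  ∀ (M : Type u) [AddCommGroup M] [Module R M], CyclicModule R M → EmbedsInFree R M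

/-- `R` is a left FGF-ring: every finitely generated left `R`-module embeds in a free module. -/
def LeftFGF : Prop :=
  ∀ (M : Type u) [AddCommGroup M] [Module R M], Module.Finite R M → EmbedsInFree R M

/-- `R` is a left Kasch ring: `Hom_R(M, R) ≠ 0` for every nonzero cyclic left `R`-module. -/
def LeftKasch : Prop :=
  ∀ (M : Type u) [AddCommGroup M] [Module R M],
    CyclicModule R M → Nontrivial M → ∃ f : M →ₗ[R] R, f ≠ 0

/-- `R` is a right Kasch ring: `Hom_R(M, R) ≠ 0` for every nonzero cyclic right `R`-module. -/
def RightKasch : Prop :=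
  ∀ (M : Type u) [AddCommGroup M] [Module Rᵐᵒᵖ M],
    CyclicModule Rᵐᵒᵖ M → Nontrivial M → ∃ f : M →ₗ[Rᵐᵒᵖ] R, f ≠ 0

/-- The socle of a module: the sum of all its simple submodules. -/
def socle (M : Type u) [AddCommGroup M] [Module R M] : Submodule R M :=
  sSup {N : Submodule R M | IsSimpleModule R N}

/-- `R` is left semiartinian: every nonzero cyclic left `R`-module has a nonzero socle. -/
def LeftSemiartinian : Prop :=
  ∀ (M : Type u) [AddCommGroup M] [Module R M],
    CyclicModule R M → Nontrivial M → socle R M ≠ ⊥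

/-- A submodule `N ⊆ M` is essential if it meets every nonzero submodule nontrivially. -/
def EssentialSub {M : Type u} [AddCommGroup M] [Module R M] (N : Submodule R M) : Prop :=
  ∀ P : Submodule R M, P ≠ ⊥ → N ⊓ P ≠ ⊥

/-- `R` is semiregular: `R/rad R` is von Neumann regular,
where `rad R` is the Jacobson radical. -/
def Semiregular : Prop :=
  ∀ a : R, ∃ x : R, a - a * x * a ∈ Ideal.jacobson (⊥ : Ideal R)

/-- `R` is semiperfect: `R/rad R` is semisimple and idempotents lift modulo `rad R`. -/
def Semiperfect : Prop :=
  IsSemisimpleModule R (R ⧸ Ideal.jacobson (⊥ : Ideal R)) ∧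
    ∀ a : R, a * a - a ∈ Ideal.jacobson (⊥ : Ideal R) →
      ∃ e : R, e * e = e ∧ e - a ∈ Ideal.jacobson (⊥ : Ideal R)

/-- A module is indecomposable if it is nonzero and is not the direct sum of two
nonzero submodules. -/
def IndecModule (M : Type u) [AddCommGroup M] [Module R M] : Prop :=
  Nontrivial M ∧ ∀ A B : Submodule R M, IsCompl A B → A = ⊥ ∨ B = ⊥

/-- `R` is weakly quasi-Frobenius: left and right coherent and left and right FP-injective. -/
def WQF : Prop :=
  LeftCoherent R ∧ RightCoherent R ∧ FPInjective R R ∧ FPInjective Rᵐᵒᵖ R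

/-- `R` is quasi-Frobenius: left and right noetherian and left and right self-injective. -/
def QF : Prop :=
  IsNoetherianRing R ∧ IsNoetherian Rᵐᵒᵖ R ∧ Module.Injective R R ∧ Module.Injective Rᵐᵒᵖ R

end Defs

/-- A group is locally finite if every finitely generated subgroup is finite. -/
def LocallyFiniteGroup (G : Type*) [Group G] : Prop :=
  ∀ H : Subgroup G, H.FG → Finite H

/-!
Both the FP-cogenerator condition on `_RR` and the FP-injectivity of `R_R` are reformulations of one
condition on matrices: a row vector killing every solution of `A x = 0` is a combination of the rows
of `A`. It says that finitely presented left modules are separated by their maps to `R`; if `R` is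
right coherent, the solutions of `A x = 0` are finitely generated, so finitely many of these maps
suffice and every finitely presented left module embeds in a free one.

When `R` is left Kasch, its injective hull `E` is an FP-cogenerator. If moreover `E` is flat, then
`∑ v_j e_j = 0` for all solutions `e` of `A e = 0` in `E` whenever `v` kills the solutions in `R`;
as `E` separates the points of the cokernel of `A`, this forces `v` to be a combination of the rows.
Conversely, over a left FGF-ring the inclusion of a finitely generated submodule of an injective
module `E` factors through a free module, and a module with this property is flat.
-/

open Filter

section ExtOne

variable {S : Type*} [Ring S]
variable {P Q F M : Type*} [AddCommGroup P] [Module S P] [AddCommGroup Q] [Module S Q]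
  [AddCommGroup F] [Module S F] [AddCommGroup M] [Module S M]

theorem exists_comp_eq_of_ker_le_ker {p : P →ₗ[S] F} (hp : Surjective p) {f : P →ₗ[S] M}
    (h : LinearMap.ker p ≤ LinearMap.ker f) : ∃ g : F →ₗ[S] M, g ∘ₗ p = f := by
  refine ⟨(LinearMap.ker p).liftQ f h ∘ₗ (p.quotKerEquivOfSurjective hp).symm.toLinearMap,
    LinearMap.ext fun x => ?_⟩
  have hx : (p.quotKerEquivOfSurjective hp).symm (p x) = Submodule.Quotient.mk x :=
    (LinearEquiv.symm_apply_eq _).2 rfl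
  simp only [LinearMap.comp_apply, LinearEquiv.coe_coe, hx, Submodule.liftQ_apply]

/-- The extension property of a submodule `K ≤ P` with respect to `M`: every homomorphism
`K → M` is the restriction of a homomorphism `P → M`. If `P` is projective it expresses the
vanishing of `Ext¹(P/K, M)`. -/
def HomsExtend (K : Submodule S P) (M : Type*) [AddCommGroup M] [Module S M] : Prop :=
  ∀ f : K →ₗ[S] M, ∃ g : P →ₗ[S] M, g ∘ₗ K.subtype = f

-- Schanuel's comparison: lifts between `P` and `Q` over `F` carry an extension problem on one
-- kernel to the other.
theorem HomsExtend.ker_of_projective [Module.Projective S P] [Module.Projective S Q]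
    {p : P →ₗ[S] F} {q : Q →ₗ[S] F} (hp : Surjective p) (hq : Surjective q)
    (h : HomsExtend (LinearMap.ker p) M) : HomsExtend (LinearMap.ker q) M := by
  intro f
  obtain ⟨s, hs⟩ := Module.projective_lifting_property q p hq
  obtain ⟨t, ht⟩ := Module.projective_lifting_property p q hp
  have hqs (x : P) : q (s x) = p x := LinearMap.congr_fun hs x
  have hpt (x : Q) : p (t x) = q x := LinearMap.congr_fun ht x
  let sKer : LinearMap.ker p →ₗ[S] LinearMap.ker q :=
    s.restrict fun x hx => by rw [LinearMap.mem_ker, hqs, hx]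
  let tKer : LinearMap.ker q →ₗ[S] LinearMap.ker p :=
    t.restrict fun x hx => by rw [LinearMap.mem_ker, hpt, hx]
  let defect : Q →ₗ[S] LinearMap.ker q :=
    (LinearMap.id - s ∘ₗ t).codRestrict _ fun x => by simp [hqs, hpt]
  obtain ⟨g, hg⟩ := h (f ∘ₗ sKer)
  refine ⟨g ∘ₗ t + f ∘ₗ defect, LinearMap.ext fun x => ?_⟩
  calc g (t x) + f (defect x) = f (sKer (tKer x)) + f (defect x) :=
        congrArg (· + f (defect x)) (LinearMap.congr_fun hg (tKer x))
    _ = f (sKer (tKer x) + defect x) := (map_add f _ _).symm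
    _ = f x := congrArg f (Subtype.ext (add_sub_cancel (s (t x)) (x : Q)))

theorem homsExtend_range_iff {u : Q →ₗ[S] P} :
    HomsExtend (LinearMap.range u) M ↔
      ∀ f : Q →ₗ[S] M, LinearMap.ker u ≤ LinearMap.ker f → ∃ g : P →ₗ[S] M, g ∘ₗ u = f := by
  constructor
  · intro h f hf
    obtain ⟨f', rfl⟩ := exists_comp_eq_of_ker_le_ker u.surjective_rangeRestrict
      (u.ker_rangeRestrict.trans_le hf)
    obtain ⟨g, rfl⟩ := h f'
    exact ⟨g, rfl⟩
  · intro h f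
    obtain ⟨g, hg⟩ := h (f ∘ₗ u.rangeRestrict)
      (u.ker_rangeRestrict.symm.trans_le (LinearMap.ker_le_ker_comp _ _))
    exact ⟨g, (LinearMap.cancel_right u.surjective_rangeRestrict).1 hg⟩

theorem homsExtend_ker_iff_of_exact {X₂ X₁ X₀ : Type*} [AddCommGroup X₂] [Module S X₂]
    [AddCommGroup X₁] [Module S X₁] [AddCommGroup X₀] [Module S X₀] {d₂ : X₂ →ₗ[S] X₁}
    {d₁ : X₁ →ₗ[S] X₀} {p : X₀ →ₗ[S] F} (h₁ : Exact d₂ d₁) (h₀ : Exact d₁ p) :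
    HomsExtend (LinearMap.ker p) M ↔
      ∀ c : X₁ →ₗ[S] M, c ∘ₗ d₂ = 0 → ∃ g : X₀ →ₗ[S] M, g ∘ₗ d₁ = c := by
  rw [h₀.linearMap_ker_eq, homsExtend_range_iff, h₁.linearMap_ker_eq]
  simp only [LinearMap.range_le_ker_iff]

end ExtOne

section ExtVanish

open CategoryTheory

variable {S : Type u} [Ring S]

theorem subsingleton_ext_one_iff {F M : ModuleCat.{u} S} (P : ProjectiveResolution F) :
    Subsingleton (((Ext ℤ (ModuleCat.{u} S) 1).obj (Opposite.op F)).obj M) ↔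
      ∀ c : P.complex.X 1 →ₗ[S] M, c ∘ₗ (P.complex.d 2 1).hom = 0 →
        ∃ g : P.complex.X 0 →ₗ[S] M, g ∘ₗ (P.complex.d 1 0).hom = c := by
  rw [← ModuleCat.isZero_iff_subsingleton, (P.isoExt (R := ℤ) 1 M).isZero_iff,
    ← HomologicalComplex.exactAt_iff_isZero_homology,
    HomologicalComplex.exactAt_iff' _ 0 1 2 (by simp) (by simp),
    ShortComplex.moduleCat_exact_iff]
  constructor
  · intro h c hc
    obtain ⟨g, hg⟩ := h (ModuleCat.ofHom c) (ModuleCat.hom_ext hc)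
    exact ⟨g.hom, congrArg ModuleCat.Hom.hom hg⟩
  · intro h c hc
    obtain ⟨g, hg⟩ := h c.hom (congrArg ModuleCat.Hom.hom hc)
    exact ⟨ModuleCat.ofHom g, ModuleCat.hom_ext hg⟩

theorem extVanish_iff_homsExtend_ker {P F M : Type u} [AddCommGroup P] [Module S P]
    [Module.Projective S P] [AddCommGroup F] [Module S F] [AddCommGroup M] [Module S M]
    {p : P →ₗ[S] F} (hp : Surjective p) : ExtVanish S F M ↔ HomsExtend (LinearMap.ker p) M := by
  let X := projectiveResolution (ModuleCat.of S F)
  have hX : Module.Projective S (X.complex.X 0) :=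
    (IsProjective.iff_projective _).2 (X.projective 0)
  let e := (HomologicalComplex.singleObjXSelf (ComplexShape.down ℕ) 0
    (ModuleCat.of S F)).toLinearEquiv
  let augmentation : X.complex.X 0 →ₗ[S] F := e.toLinearMap ∘ₗ (X.π.f 0).hom
  have h_surj : Surjective augmentation :=
    e.surjective.comp ((ModuleCat.epi_iff_surjective (X.π.f 0)).1 inferInstance)
  have h₁ : Exact (X.complex.d 2 1).hom (X.complex.d 1 0).hom :=
    (ShortComplex.ShortExact.moduleCat_exact_iff_function_exact _).1 (X.exact_succ 0)
  have h₀ : Exact (X.complex.d 1 0).hom augmentation := by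
    have := (ShortComplex.ShortExact.moduleCat_exact_iff_function_exact _).1 X.exact₀
    exact fun x => e.map_eq_zero_iff.trans (this x)
  rw [ExtVanish, subsingleton_ext_one_iff X, ← homsExtend_ker_iff_of_exact h₁ h₀]
  exact ⟨.ker_of_projective h_surj hp, .ker_of_projective hp h_surj⟩

end ExtVanish

theorem finitePresentation_quotient_range {S P Q : Type*} [Ring S] [AddCommGroup P] [Module S P]
    [Module.FinitePresentation S P] [AddCommGroup Q] [Module S Q] [Module.Finite S Q]
    (u : Q →ₗ[S] P) : Module.FinitePresentation S (P ⧸ LinearMap.range u) :=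
  Module.finitePresentation_of_surjective _ (Submodule.mkQ_surjective _) <| by
    rw [Submodule.ker_mkQ]
    exact Submodule.FG.of_finite

section Coherence

variable {S : Type*} [Ring S] {X Y : Type*} [AddCommGroup X] [Module S X] [AddCommGroup Y]
  [Module S Y]

/-- A module is pseudo-coherent if its finitely generated submodules are finitely presented;
`LeftCoherent` and `RightCoherent` say this of the two regular modules. -/
def PseudoCoherent (S X : Type*) [Ring S] [AddCommGroup X] [Module S X] : Prop :=
  ∀ N : Submodule S X, N.FG → Module.FinitePresentation S N

namespace PseudoCoherent

theorem fg_ker (hX : PseudoCoherent S X) [Module.Finite S Y] (f : Y →ₗ[S] X) :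
    (LinearMap.ker f).FG := by
  have : Module.FinitePresentation S (LinearMap.range f) := hX _ (Submodule.FG.of_finite)
  have := Module.FinitePresentation.fg_ker f.rangeRestrict f.surjective_rangeRestrict
  rwa [LinearMap.ker_rangeRestrict] at this

theorem fg_ker_pi (hX : PseudoCoherent S X) [Module.Finite S Y] {ι : Type*} [Finite ι]
    (f : ι → Y →ₗ[S] X) : (LinearMap.ker (LinearMap.pi f)).FG := by
  classical
  cases nonempty_fintype ι
  suffices ∀ s : Finset ι, (⨅ i ∈ s, LinearMap.ker (f i)).FG by
    simpa only [LinearMap.ker_pi, Finset.mem_univ, iInf_pos] using this Finset.univ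
  intro s
  induction s using Finset.induction with
  | empty => simpa using (Module.Finite.fg_top : (⊤ : Submodule S Y).FG)
  | insert i s _ ih =>
    set K := ⨅ i ∈ s, LinearMap.ker (f i)
    have : Module.Finite S K := Module.Finite.iff_fg.2 ih
    rw [Finset.iInf_insert, inf_comm, ← Submodule.map_comap_subtype, ← LinearMap.ker_comp]
    exact (hX.fg_ker (f i ∘ₗ K.subtype)).map _

theorem fg_ker_finsupp (hX : PseudoCoherent S X) [Module.Finite S Y] {ι : Type*}
    (f : Y →ₗ[S] ι →₀ X) : (LinearMap.ker f).FG := by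
  classical
  obtain ⟨t, ht⟩ := (Module.Finite.fg_top : (⊤ : Submodule S Y).FG)
  let s := t.biUnion fun y => (f y).support
  have h_range : LinearMap.range f ≤ Finsupp.supported X S s := by
    rw [LinearMap.range_eq_map, ← ht, Submodule.map_span_le]
    exact fun y hy => Finset.coe_subset.2 (Finset.subset_biUnion_of_mem (fun y => (f y).support) hy)
  have h_ker : LinearMap.ker f =
      LinearMap.ker (LinearMap.pi fun i : s => Finsupp.lapply (i : ι) ∘ₗ f) := by
    refine le_antisymm (fun y hy => ?_) fun y hy => Finsupp.ext fun i => ?_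
    · rw [LinearMap.mem_ker] at hy
      exact funext fun i => by simp [hy]
    · by_cases hi : i ∈ s
      · exact congrFun hy ⟨i, hi⟩
      · exact (Finsupp.mem_supported' S _).1 (h_range ⟨y, rfl⟩) i hi
  rw [h_ker]
  exact hX.fg_ker_pi _

end PseudoCoherent

end Coherence

section Matrices

open scoped Matrix

variable {R : Type*} [Ring R] {m n : Type*} [Fintype n]

instance : Module.Free Rᵐᵒᵖ R := Module.Free.of_equiv (opLinearEquiv Rᵐᵒᵖ).symm

instance : Module.FinitePresentation Rᵐᵒᵖ R :=
  Module.FinitePresentation.of_equiv (opLinearEquiv Rᵐᵒᵖ).symm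

theorem exists_eq_dotProduct_left (f : (n → R) →ₗ[Rᵐᵒᵖ] R) :
    ∃ v : n → R, f = dotProductBilin R Rᵐᵒᵖ v := by
  classical
  refine ⟨fun i => f (Pi.single i 1), LinearMap.pi_ext fun i r => ?_⟩
  have hr : (Pi.single i r : n → R) = op r • Pi.single i 1 := by
    rw [← Pi.single_smul, op_smul_eq_mul, one_mul]
  simp only [hr, map_smul, dotProductBilin_apply_apply, dotProduct_single, mul_one]

theorem range_mulVecBilin (A : Matrix m n R) :
    LinearMap.range (Matrix.mulVecBilin R Rᵐᵒᵖ A) = Submodule.span Rᵐᵒᵖ (Set.range A.col) := by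
  ext y
  simp only [LinearMap.mem_range, Matrix.mulVecBilin_apply, Matrix.mulVec_eq_sum,
    Submodule.mem_span_range_iff_exists_fun]
  exact ⟨fun ⟨x, hx⟩ => ⟨fun i => op (x i), hx⟩, fun ⟨c, hc⟩ => ⟨fun i => unop (c i), hc⟩⟩

theorem exists_ker_eq_range_vecMulLinear (N : Type*) [AddCommGroup N] [Module R N]
    [Module.FinitePresentation R N] :
    ∃ (m n : ℕ) (A : Matrix (Fin n) (Fin m) R) (p : (Fin m → R) →ₗ[R] N),
      Surjective p ∧ LinearMap.ker p = LinearMap.range A.vecMulLinear := by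
  obtain ⟨m, p, hp⟩ := Module.Finite.exists_fin' R N
  obtain ⟨n, A, hA⟩ := Submodule.fg_iff_exists_fin_generating_family.1
    (Module.FinitePresentation.fg_ker p hp)
  exact ⟨m, n, Matrix.of A, p, hp, hA.symm.trans (range_vecMulLinear (Matrix.of A)).symm⟩

theorem exists_ker_eq_range_mulVecBilin (N : Type*) [AddCommGroup N] [Module Rᵐᵒᵖ N]
    [Module.FinitePresentation Rᵐᵒᵖ N] :
    ∃ (m n : ℕ) (A : Matrix (Fin n) (Fin m) R) (p : (Fin n → R) →ₗ[Rᵐᵒᵖ] N),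
      Surjective p ∧ LinearMap.ker p = LinearMap.range (Matrix.mulVecBilin R Rᵐᵒᵖ A) := by
  obtain ⟨n, p, hp⟩ := Module.Finite.exists_fin' Rᵐᵒᵖ N
  let e : (Fin n → R) ≃ₗ[Rᵐᵒᵖ] (Fin n → Rᵐᵒᵖ) :=
    LinearEquiv.piCongrRight fun _ => opLinearEquiv Rᵐᵒᵖ
  have hpe : Surjective (p ∘ₗ e.toLinearMap) := hp.comp e.surjective
  obtain ⟨m, A, hA⟩ := Submodule.fg_iff_exists_fin_generating_family.1
    (Module.FinitePresentation.fg_ker _ hpe)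
  exact ⟨m, n, (Matrix.of A)ᵀ, _, hpe, hA.symm.trans (range_mulVecBilin (Matrix.of A)ᵀ).symm⟩

theorem RightCoherent.fg_ker_mulVecBilin [Finite m] (hr : RightCoherent R) (A : Matrix m n R) :
    (LinearMap.ker (Matrix.mulVecBilin R Rᵐᵒᵖ A)).FG :=
  PseudoCoherent.fg_ker_pi hr fun i => dotProductBilin R Rᵐᵒᵖ (A i)

end Matrices

section DoubleAnnihilator

open scoped Matrix

/-- The double annihilator condition for matrices over `R`: a row vector that annihilates from the
left every solution of `A *ᵥ x = 0` is a left linear combination of the rows of `A`. -/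
def MatrixDoubleAnnihilator (R : Type*) [Ring R] : Prop :=
  ∀ ⦃m n : ℕ⦄ (A : Matrix (Fin n) (Fin m) R) (v : Fin m → R),
    (∀ x, A *ᵥ x = 0 → v ⬝ᵥ x = 0) → ∃ c, c ᵥ* A = v

theorem matrixDoubleAnnihilator_iff_homsExtend {R : Type*} [Ring R] :
    MatrixDoubleAnnihilator R ↔ ∀ {m n : ℕ} (A : Matrix (Fin n) (Fin m) R),
      HomsExtend (LinearMap.range (Matrix.mulVecBilin R Rᵐᵒᵖ A)) R := by
  refine forall₃_congr fun m n A => ?_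
  rw [homsExtend_range_iff]
  constructor
  · intro h f hf
    obtain ⟨v, rfl⟩ := exists_eq_dotProduct_left f
    obtain ⟨c, rfl⟩ := h v fun x hx => hf hx
    exact ⟨dotProductBilin R Rᵐᵒᵖ c, LinearMap.ext fun x => Matrix.dotProduct_mulVec c A x⟩
  · intro h v hv
    obtain ⟨g, hg⟩ := h (dotProductBilin R Rᵐᵒᵖ v) fun x hx => hv x hx
    obtain ⟨c, rfl⟩ := exists_eq_dotProduct_left g
    refine ⟨c, dotProduct_eq _ _ fun x => ?_⟩
    exact (Matrix.dotProduct_mulVec c A x).symm.trans (LinearMap.congr_fun hg x)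

variable {R : Type u} [Ring R]

theorem fpInjective_op_iff_homsExtend {M : Type u} [AddCommGroup M] [Module Rᵐᵒᵖ M] :
    FPInjective Rᵐᵒᵖ M ↔ ∀ {m n : ℕ} (A : Matrix (Fin n) (Fin m) R),
      HomsExtend (LinearMap.range (Matrix.mulVecBilin R Rᵐᵒᵖ A)) M := by
  constructor
  · intro h m n A
    let K := LinearMap.range (Matrix.mulVecBilin R Rᵐᵒᵖ A)
    have hK := extVanish_iff_homsExtend_ker K.mkQ_surjective |>.1
      (h _ (finitePresentation_quotient_range _))
    rwa [K.ker_mkQ] at hK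
  · intro h F _ _ _
    obtain ⟨m, n, A, p, hp, hker⟩ := exists_ker_eq_range_mulVecBilin (R := R) F
    exact (extVanish_iff_homsExtend_ker hp).2 (hker ▸ h A)

theorem fpInjective_op_iff_matrixDoubleAnnihilator :
    FPInjective Rᵐᵒᵖ R ↔ MatrixDoubleAnnihilator R :=
  fpInjective_op_iff_homsExtend.trans matrixDoubleAnnihilator_iff_homsExtend.symm

theorem isFPCogenerator_iff {K : Type u} [AddCommGroup K] [Module R K] :
    IsFPCogenerator R K ↔ ∀ (N : Type u) [AddCommGroup N] [Module R N],
      Module.FinitePresentation R N → ∀ y : N, y ≠ 0 → ∃ g : N →ₗ[R] K, g y ≠ 0 := by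
  constructor
  · intro h N _ _ hN y hy
    have hf : LinearMap.toSpanSingleton R N y ≠ 0 := fun h0 =>
      hy (by simpa using LinearMap.congr_fun h0 1)
    obtain ⟨g, hg⟩ := h R N inferInstance hN _ hf
    exact ⟨g, fun hgy => hg (LinearMap.ext_ring (by simpa using hgy))⟩
  · intro h M N _ _ _ _ _ hN f hf
    obtain ⟨x, hx⟩ := DFunLike.exists_ne hf
    obtain ⟨g, hg⟩ := h N hN (f x) hx
    exact ⟨g, fun h0 => hg (LinearMap.congr_fun h0 x)⟩

theorem MatrixDoubleAnnihilator.exists_apply_ne_zero (h : MatrixDoubleAnnihilator R)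
    {N : Type*} [AddCommGroup N] [Module R N] [Module.FinitePresentation R N] {y : N}
    (hy : y ≠ 0) : ∃ g : N →ₗ[R] R, g y ≠ 0 := by
  obtain ⟨m, n, A, p, hp, hker⟩ := exists_ker_eq_range_vecMulLinear (R := R) N
  obtain ⟨v, rfl⟩ := hp y
  have hv : ¬ ∃ c, c ᵥ* A = v := fun hc => hy (hker.ge hc)
  obtain ⟨x, hx, hvx⟩ : ∃ x, A *ᵥ x = 0 ∧ v ⬝ᵥ x ≠ 0 := by
    simpa only [not_forall, exists_prop] using mt (h A v) hv
  let f : (Fin m → R) →ₗ[R] R := (dotProductBilin R Rᵐᵒᵖ).flip x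
  have hf : LinearMap.ker p ≤ LinearMap.ker f := by
    rw [hker]
    rintro _ ⟨c, rfl⟩
    calc c ᵥ* A ⬝ᵥ x = c ⬝ᵥ A *ᵥ x := (Matrix.dotProduct_mulVec c A x).symm
      _ = 0 := by rw [hx, dotProduct_zero]
  obtain ⟨g, hg⟩ := exists_comp_eq_of_ker_le_ker hp hf
  exact ⟨g, (LinearMap.congr_fun hg v).trans_ne hvx⟩

end DoubleAnnihilator

section EmbeddingInFree

open scoped Matrix

variable {R : Type u} [Ring R]

theorem EmbedsInFree.of_injective_pi {M : Type u} [AddCommGroup M] [Module R M] {ι : Type u}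
    [Finite ι] {f : M →ₗ[R] ι → R} (hf : Injective f) : EmbedsInFree R M :=
  let e := (Finsupp.linearEquivFunOnFinite R R ι).symm
  ⟨ι, e.toLinearMap ∘ₗ f, e.injective.comp hf⟩

theorem MatrixDoubleAnnihilator.leftIF (h : MatrixDoubleAnnihilator R) (hr : RightCoherent R) :
    LeftIF R := by
  intro M _ _ _
  obtain ⟨m, n, A, p, hp, hker⟩ := exists_ker_eq_range_vecMulLinear (R := R) M
  obtain ⟨t, ht⟩ := hr.fg_ker_mulVecBilin A
  let d : (Fin m → R) →ₗ[R] t → R :=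
    LinearMap.pi fun x => (dotProductBilin R Rᵐᵒᵖ).flip (x : Fin m → R)
  have hd : LinearMap.ker d = LinearMap.ker p := by
    rw [hker]
    refine le_antisymm (fun v hv => h A v fun x hx => ?_) ?_
    · have h_span : Submodule.span Rᵐᵒᵖ t ≤ LinearMap.ker (dotProductBilin R Rᵐᵒᵖ v) :=
        Submodule.span_le.2 fun y hy => congrFun hv ⟨y, hy⟩
      exact h_span (ht.ge hx)
    · rintro _ ⟨c, rfl⟩
      refine funext fun x => ?_
      have hx : A *ᵥ (x : Fin m → R) = 0 := ht.le (Submodule.subset_span x.2)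
      calc c ᵥ* A ⬝ᵥ x = c ⬝ᵥ A *ᵥ x := (Matrix.dotProduct_mulVec c A x).symm
        _ = 0 := by rw [hx, dotProduct_zero]
  obtain ⟨g, hg⟩ := exists_comp_eq_of_ker_le_ker hp hd.ge
  refine .of_injective_pi (f := g) ((injective_iff_map_eq_zero g).2 fun y hy => ?_)
  obtain ⟨v, rfl⟩ := hp y
  exact hd.le ((LinearMap.congr_fun hg v).symm.trans hy)

theorem LeftIF.leftFGF [IsNoetherianRing R] (h : LeftIF R) : LeftFGF R :=
  fun M _ _ _ => h M (Module.finitePresentation_of_finite R M)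

theorem LeftFGF.isNoetherianRing (h : LeftFGF R) (hl : LeftCoherent R) : IsNoetherianRing R := by
  refine (isNoetherianRing_iff_ideal_fg R).2 fun I => ?_
  obtain ⟨ι, f, hf⟩ := h (R ⧸ I) inferInstance
  have hI : LinearMap.ker (f ∘ₗ I.mkQ) = I := by
    rw [LinearMap.ker_comp_of_ker_eq_bot _ (LinearMap.ker_eq_bot.2 hf), I.ker_mkQ]
  exact hI ▸ PseudoCoherent.fg_ker_finsupp hl (f ∘ₗ I.mkQ)

theorem LeftFGF.isFPCogenerator (h : LeftFGF R) : IsFPCogenerator R R := by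
  refine isFPCogenerator_iff.2 fun N _ _ _ y hy => ?_
  obtain ⟨ι, f, hf⟩ := h N inferInstance
  obtain ⟨i, hi⟩ := DFunLike.ne_iff.1 ((map_ne_zero_iff f hf).2 hy)
  exact ⟨Finsupp.lapply i ∘ₗ f, hi⟩

theorem CyclicModule.finite {M : Type u} [AddCommGroup M] [Module R M] (h : CyclicModule R M) :
    Module.Finite R M :=
  let ⟨m, hm⟩ := h
  ⟨{m}, by rwa [Finset.coe_singleton]⟩

theorem IsFPCogenerator.leftKasch [IsNoetherianRing R] (h : IsFPCogenerator R R) :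
    LeftKasch R := by
  intro M _ _ hM _
  have := hM.finite
  obtain ⟨y, hy⟩ := exists_ne (0 : M)
  obtain ⟨g, hg⟩ := isFPCogenerator_iff.1 h M (Module.finitePresentation_of_finite R M) y hy
  exact ⟨g, fun h0 => hg (LinearMap.congr_fun h0 y)⟩

end EmbeddingInFree

namespace NCTensor

variable {R : Type u} [Ring R] {K L K' M M' M'' : Type u}
  [AddCommGroup K] [Module Rᵐᵒᵖ K] [AddCommGroup L] [Module Rᵐᵒᵖ L]
  [AddCommGroup K'] [Module Rᵐᵒᵖ K'] [AddCommGroup M] [Module R M]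
  [AddCommGroup M'] [Module R M'] [AddCommGroup M''] [Module R M'']

variable (R K M) in
/-- The quotient map presenting `K ⊗_R M` by formal sums of pairs. -/
def ofFormalSum : FreeAbelianGroup (K × M) →+ NCTensor R K M :=
  QuotientAddGroup.mk' (TensorRels R K M)

theorem ofFormalSum_surjective : Surjective (ofFormalSum R K M) :=
  QuotientAddGroup.mk'_surjective _

theorem ofFormalSum_eq_zero_iff {x : FreeAbelianGroup (K × M)} :
    ofFormalSum R K M x = 0 ↔ x ∈ TensorRels R K M :=
  QuotientAddGroup.eq_zero_iff x

theorem ofFormalSum_eq_add {x y z : FreeAbelianGroup (K × M)}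
    (h : x - y - z ∈ TensorRels R K M) :
    ofFormalSum R K M x = ofFormalSum R K M y + ofFormalSum R K M z := by
  rwa [← ofFormalSum_eq_zero_iff, sub_sub, map_sub, map_add, sub_eq_zero] at h

variable (R K M) in
/-- The pure tensors `mk R K M k m = k ⊗ m`, as a biadditive map. -/
def mk : K →+ M →+ NCTensor R K M :=
  AddMonoidHom.mk'
    (fun k => AddMonoidHom.mk' (fun m => ofFormalSum R K M (.of (k, m))) fun m₁ m₂ =>
      ofFormalSum_eq_add (AddSubgroup.subset_closure (.inl (.inr ⟨k, m₁, m₂, rfl⟩))))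
    fun k₁ k₂ => AddMonoidHom.ext fun m =>
      ofFormalSum_eq_add (AddSubgroup.subset_closure (.inl (.inl ⟨k₁, k₂, m, rfl⟩)))

theorem ofFormalSum_of (k : K) (m : M) : ofFormalSum R K M (.of (k, m)) = mk R K M k m := rfl

theorem mk_op_smul (r : R) (k : K) (m : M) : mk R K M (op r • k) m = mk R K M k (r • m) := by
  rw [← sub_eq_zero, ← ofFormalSum_of, ← ofFormalSum_of, ← map_sub, ofFormalSum_eq_zero_iff]
  exact AddSubgroup.subset_closure (.inr ⟨r, k, m, rfl⟩)

theorem addHom_ext {A : Type*} [AddCommGroup A] {f g : NCTensor R K M →+ A}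
    (h : ∀ k m, f (mk R K M k m) = g (mk R K M k m)) : f = g :=
  (AddMonoidHom.cancel_right ofFormalSum_surjective).1 <|
    FreeAbelianGroup.lift_ext _ _ fun p => h p.1 p.2

/-- The homomorphism `k ⊗ m ↦ φ k m` induced by an `R`-balanced biadditive map `φ`. -/
def lift {A : Type*} [AddCommGroup A] (φ : K →+ M →+ A)
    (hφ : ∀ (r : R) k m, φ (op r • k) m = φ k (r • m)) : NCTensor R K M →+ A :=
  QuotientAddGroup.lift _ (FreeAbelianGroup.lift fun p => φ p.1 p.2) <| by
    refine (AddSubgroup.closure_le _).2 ?_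
    rintro x ((⟨k₁, k₂, m, rfl⟩ | ⟨k, m₁, m₂, rfl⟩) | ⟨r, k, m, rfl⟩) <;>
      simp [hφ]

theorem lift_mk {A : Type*} [AddCommGroup A] (φ : K →+ M →+ A)
    (hφ : ∀ (r : R) k m, φ (op r • k) m = φ k (r • m)) (k : K) (m : M) :
    lift φ hφ (mk R K M k m) = φ k m :=
  FreeAbelianGroup.lift_apply_of (fun p : K × M => φ p.1 p.2) (k, m)

theorem tensorCongr_ofFormalSum (μ : K →ₗ[Rᵐᵒᵖ] L) (ν : M →ₗ[R] M')
    (x : FreeAbelianGroup (K × M)) :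
    tensorCongr R μ ν (ofFormalSum R K M x) =
      ofFormalSum R L M' (FreeAbelianGroup.lift (fun p => .of (μ p.1, ν p.2)) x) := rfl

theorem tensorCongr_mk (μ : K →ₗ[Rᵐᵒᵖ] L) (ν : M →ₗ[R] M') (k : K) (m : M) :
    tensorCongr R μ ν (mk R K M k m) = mk R L M' (μ k) (ν m) := by
  rw [← ofFormalSum_of, tensorCongr_ofFormalSum, FreeAbelianGroup.lift_apply_of, ofFormalSum_of]

theorem tensorCongr_comp (μ' : L →ₗ[Rᵐᵒᵖ] K') (μ : K →ₗ[Rᵐᵒᵖ] L) (ν' : M' →ₗ[R] M'')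
    (ν : M →ₗ[R] M') (x : NCTensor R K M) :
    tensorCongr R μ' ν' (tensorCongr R μ ν x) = tensorCongr R (μ' ∘ₗ μ) (ν' ∘ₗ ν) x := by
  suffices h : (tensorCongr R μ' ν').comp (tensorCongr R μ ν) =
    tensorCongr R (μ' ∘ₗ μ) (ν' ∘ₗ ν) from DFunLike.congr_fun h x
  exact addHom_ext fun k m => by simp [tensorCongr_mk]

open Classical in
/-- Reads a formal sum of pairs as an element of `K ⊗_R N`, discarding the pairs whose second entry
lies outside `N`; for a given sum nothing is discarded once `N` is large enough. -/
noncomputable def restrictTo (N : Submodule R M) : FreeAbelianGroup (K × M) →+ NCTensor R K N :=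
  FreeAbelianGroup.lift fun p => if h : p.2 ∈ N then mk R K N p.1 ⟨p.2, h⟩ else 0

theorem restrictTo_of {N : Submodule R M} {m : M} (hm : m ∈ N) (k : K) :
    restrictTo N (.of (k, m)) = mk R K N k ⟨m, hm⟩ := by
  rw [restrictTo, FreeAbelianGroup.lift_apply_of, dif_pos hm]

theorem restrictTo_map (μ : K →ₗ[Rᵐᵒᵖ] L) (N : Submodule R M) (x : FreeAbelianGroup (K × M)) :
    restrictTo N (FreeAbelianGroup.lift (fun p => .of (μ p.1, p.2)) x) =
      tensorCongr R μ LinearMap.id (restrictTo N x) := by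
  suffices h : (restrictTo N).comp (FreeAbelianGroup.lift fun p : K × M => .of (μ p.1, p.2)) =
    (tensorCongr R μ LinearMap.id).comp (restrictTo N) from DFunLike.congr_fun h x
  refine FreeAbelianGroup.lift_ext _ _ fun ⟨k, m⟩ => ?_
  by_cases hm : m ∈ N <;> simp [restrictTo, hm, tensorCongr_mk]

theorem eventually_mem (m : M) :
    ∀ᶠ N : {N : Submodule R M // N.FG} in atTop, m ∈ N.1 :=
  (eventually_ge_atTop ⟨Submodule.span R {m}, Submodule.fg_span_singleton m⟩).mono fun _ hN =>
    hN (Submodule.mem_span_singleton_self m)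

theorem eventually_restrictTo_eq_zero {x : FreeAbelianGroup (K × M)}
    (hx : ofFormalSum R K M x = 0) :
    ∀ᶠ N : {N : Submodule R M // N.FG} in atTop, restrictTo N.1 x = 0 := by
  rw [ofFormalSum_eq_zero_iff] at hx
  induction hx using AddSubgroup.closure_induction with
  | zero => exact .of_forall fun N => map_zero _
  | add x y _ _ hx hy =>
    filter_upwards [hx, hy] with N hx hy
    rw [map_add, hx, hy, add_zero]
  | neg x _ hx =>
    filter_upwards [hx] with N hx
    rw [map_neg, hx, neg_zero]
  | mem x hx =>
    obtain (⟨k₁, k₂, m, rfl⟩ | ⟨k, m₁, m₂, rfl⟩) | ⟨r, k, m, rfl⟩ := hx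
    · filter_upwards [eventually_mem m] with N hm
      simp only [map_sub, restrictTo_of hm, map_add, AddMonoidHom.add_apply, add_sub_cancel_left,
        sub_self]
    · filter_upwards [eventually_mem m₁, eventually_mem m₂] with N h₁ h₂
      rw [map_sub, map_sub, restrictTo_of h₁, restrictTo_of h₂, restrictTo_of (N.1.add_mem h₁ h₂),
        sub_sub, ← map_add, sub_eq_zero]
      rfl
    · filter_upwards [eventually_mem m] with N hm
      rw [map_sub, restrictTo_of hm, restrictTo_of (N.1.smul_mem r hm), mk_op_smul, sub_eq_zero]
      rfl

theorem eventually_tensorCongr_subtype_restrictTo (x : FreeAbelianGroup (K × M)) :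
    ∀ᶠ N : {N : Submodule R M // N.FG} in atTop,
      tensorCongr R LinearMap.id N.1.subtype (restrictTo N.1 x) = ofFormalSum R K M x := by
  induction x using FreeAbelianGroup.induction_on with
  | zero => exact .of_forall fun N => by simp only [map_zero]
  | of p =>
    filter_upwards [eventually_mem p.2] with N hp
    rw [restrictTo_of hp, tensorCongr_mk, ofFormalSum_of]
    rfl
  | neg p hp =>
    filter_upwards [hp] with N hp
    simp only [map_neg, hp]
  | add x y hx hy =>
    filter_upwards [hx, hy] with N hx hy
    simp only [map_add, hx, hy]

theorem exists_fg_tensorCongr_eq_zero (μ : K →ₗ[Rᵐᵒᵖ] L) {x : NCTensor R K M}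
    (hx : tensorCongr R μ LinearMap.id x = 0) :
    ∃ N : Submodule R M, N.FG ∧ ∃ y : NCTensor R K N,
      tensorCongr R LinearMap.id N.subtype y = x ∧ tensorCongr R μ LinearMap.id y = 0 := by
  obtain ⟨x, rfl⟩ := ofFormalSum_surjective x
  obtain ⟨N, hNx, hN⟩ := ((eventually_tensorCongr_subtype_restrictTo x).and
    (eventually_restrictTo_eq_zero hx)).exists
  exact ⟨N.1, N.2, restrictTo N.1 x, hNx, (restrictTo_map μ N.1 x).symm.trans hN⟩

/-- The coordinates `K ⊗_R R^(ι) → K^(ι)` of a tensor over a free module. -/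
noncomputable def coordinates (ι : Type u) : NCTensor R K (ι →₀ R) →+ (ι →₀ K) :=
  let opSmul : K →+ R →+ K := ((smulAddHom Rᵐᵒᵖ K).comp opAddEquiv.toAddMonoidHom).flip
  lift (AddMonoidHom.mk' (fun k => Finsupp.mapRange.addMonoidHom (opSmul k)) fun k₁ k₂ =>
      AddMonoidHom.ext fun y => Finsupp.ext fun i => by simp)
    fun r k y => Finsupp.ext fun i => by simp [opSmul, mul_smul]

theorem coordinates_mk_apply {ι : Type u} (k : K) (y : ι →₀ R) (i : ι) :
    coordinates ι (mk R K (ι →₀ R) k y) i = op (y i) • k := by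
  simp [coordinates, lift_mk]

theorem coordinates_injective (ι : Type u) :
    Injective (coordinates ι : NCTensor R K (ι →₀ R) →+ (ι →₀ K)) := by
  let ofCoordinates : (ι →₀ K) →+ NCTensor R K (ι →₀ R) :=
    Finsupp.liftAddHom fun i => (mk R K (ι →₀ R)).flip (Finsupp.single i 1)
  suffices h : ofCoordinates.comp (coordinates ι) = AddMonoidHom.id _ from
    LeftInverse.injective (g := ofCoordinates) (DFunLike.congr_fun h)
  refine addHom_ext fun k y => ?_
  induction y using Finsupp.induction_linear with
  | zero => simp
  | add y z hy hz => simp_all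
  | single i r =>
    have h : coordinates ι (mk R K (ι →₀ R) k (Finsupp.single i r)) =
      Finsupp.single i (op r • k) := by
      classical
      ext j
      simp only [coordinates_mk_apply, Finsupp.single_apply]
      split_ifs <;> simp
    simp [ofCoordinates, h, mk_op_smul]

end NCTensor

section Flat

variable {R : Type u} [Ring R] {E : Type u} [AddCommGroup E] [Module R E]

open NCTensor

theorem ModFlat.of_forall_fg
    (h : ∀ N : Submodule R E, N.FG → ∃ (F : Type u) (_ : AddCommGroup F) (_ : Module R F)
      (f : N →ₗ[R] F) (g : F →ₗ[R] E), ModFlat R F ∧ g ∘ₗ f = N.subtype) : ModFlat R E := by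
  intro K L _ _ _ _ μ hμ
  refine (injective_iff_map_eq_zero _).2 fun x hx => ?_
  obtain ⟨N, hN, y, rfl, hy⟩ := exists_fg_tensorCongr_eq_zero μ hx
  obtain ⟨F, _, _, f, g, hF, hgf⟩ := h N hN
  have hfy : tensorCongr R LinearMap.id f y = 0 := by
    refine (map_eq_zero_iff _ (hF K L μ hμ)).1 ?_
    calc tensorCongr R μ LinearMap.id (tensorCongr R LinearMap.id f y)
        = tensorCongr R LinearMap.id f (tensorCongr R μ LinearMap.id y) := by
          simp only [tensorCongr_comp, LinearMap.id_comp, LinearMap.comp_id]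
      _ = 0 := by rw [hy, map_zero]
  calc tensorCongr R LinearMap.id N.subtype y
      = tensorCongr R LinearMap.id g (tensorCongr R LinearMap.id f y) := by
        rw [tensorCongr_comp, LinearMap.id_comp, hgf]
    _ = 0 := by rw [hfy, map_zero]

theorem modFlat_finsupp (ι : Type u) : ModFlat R (ι →₀ R) := by
  intro K L _ _ _ _ μ hμ
  suffices h : (coordinates ι).comp (tensorCongr R μ LinearMap.id) =
      (Finsupp.mapRange.addMonoidHom μ.toAddMonoidHom).comp (coordinates ι) by
    refine Injective.of_comp (f := coordinates ι) ?_
    rw [← AddMonoidHom.coe_comp, h, AddMonoidHom.coe_comp]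
    exact (Finsupp.mapRange_injective _ (map_zero μ) hμ).comp (coordinates_injective ι)
  refine addHom_ext fun k y => Finsupp.ext fun i => ?_
  simp [tensorCongr_mk, coordinates_mk_apply]

theorem modFlat_self : ModFlat R R := by
  let e := Finsupp.uniqueLinearEquiv R R PUnit.unit.{u + 1}
  exact .of_forall_fg fun N _ => ⟨_, _, _, e.symm.toLinearMap ∘ₗ N.subtype, e.toLinearMap,
    modFlat_finsupp PUnit.{u + 1}, LinearMap.ext fun x => e.apply_symm_apply x⟩

theorem LeftFGF.modFlat_of_injective (h : LeftFGF R) [Module.Injective R E] : ModFlat R E := by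
  refine .of_forall_fg fun N hN => ?_
  have := Module.Finite.iff_fg.2 hN
  obtain ⟨ι, f, hf⟩ := h N inferInstance
  obtain ⟨g, hg⟩ := Module.Injective.out f hf N.subtype
  exact ⟨_, _, _, f, g, modFlat_finsupp ι, LinearMap.ext hg⟩

open scoped Matrix

-- In `K ⊗ E`, with `K` the column space of `A`, the element `∑ A_j ⊗ e_j` dies in `R^n ⊗ E`; by
-- flatness it is zero, and the functional `A *ᵥ x ↦ v ⬝ᵥ x` on `K` sends it to `∑ v_j • e_j`.
theorem ModFlat.sum_smul_eq_zero {m : Type*} [Fintype m] {n : ℕ} (hE : ModFlat R E)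
    (A : Matrix (Fin n) m R) {v : m → R} (hv : ∀ x, A *ᵥ x = 0 → v ⬝ᵥ x = 0) {e : m → E}
    (he : ∀ i, ∑ j, A i j • e j = 0) : ∑ j, v j • e j = 0 := by
  classical
  let a := Matrix.mulVecBilin R Rᵐᵒᵖ A
  obtain ⟨V, hV⟩ := exists_comp_eq_of_ker_le_ker a.surjective_rangeRestrict
    (f := dotProductBilin R Rᵐᵒᵖ v) fun x hx => hv x (a.ker_rangeRestrict.le hx)
  let c (j : m) : LinearMap.range a := a.rangeRestrict (Pi.single j 1)
  have hc (j : m) : (c j : Fin n → R) = ∑ i, op (A i j) • Pi.single i 1 := by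
    ext i
    simp [c, a, Pi.single_apply]
  have hVc (j : m) : V (c j) = v j :=
    (LinearMap.congr_fun hV _).trans (dotProduct_single_one v j)
  let z := ∑ j, mk R (LinearMap.range a) E (c j) (e j)
  have hz : z = 0 := by
    refine (map_eq_zero_iff _ (hE _ _ _ (LinearMap.range a).subtype_injective)).1 ?_
    calc tensorCongr R (LinearMap.range a).subtype LinearMap.id z
        = ∑ j, ∑ i, mk R (Fin n → R) E (Pi.single i 1) (A i j • e j) := by
          simp [z, tensorCongr_mk, hc, mk_op_smul]
      _ = ∑ i, mk R (Fin n → R) E (Pi.single i 1) (∑ j, A i j • e j) := by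
          simp only [map_sum]
          exact Finset.sum_comm
      _ = 0 := by simp [he]
  let φ : NCTensor R (LinearMap.range a) E →+ E :=
    lift ((smulAddHom R E).comp V.toAddMonoidHom) fun r k y => by simp [mul_smul]
  have hφ (k : LinearMap.range a) (y : E) : φ (mk R _ E k y) = V k • y := lift_mk _ _ k y
  calc ∑ j, v j • e j = φ z := by simp only [z, map_sum, hφ, hVc]
    _ = 0 := by rw [hz, map_zero]

theorem MatrixDoubleAnnihilator.of_modFlat (hE : ModFlat R E) (hcog : IsFPCogenerator R E) :
    MatrixDoubleAnnihilator R := by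
  intro m n A v hv
  by_contra hc
  let K := LinearMap.range A.vecMulLinear
  obtain ⟨g, hg⟩ := isFPCogenerator_iff.1 hcog _ (finitePresentation_quotient_range _) (K.mkQ v)
    fun hvK => hc ((Submodule.Quotient.mk_eq_zero K).1 hvK)
  let e (j : Fin m) : E := g (K.mkQ fun k => if j = k then 1 else 0)
  have he (w : Fin m → R) : g (K.mkQ w) = ∑ j, w j • e j :=
    LinearMap.pi_apply_eq_sum_univ (g ∘ₗ K.mkQ) w
  refine hg ((he v).trans (hE.sum_smul_eq_zero A hv fun i => ?_))
  have hAi : K.mkQ (A i) = 0 :=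
    (Submodule.Quotient.mk_eq_zero K).2 ⟨Pi.single i 1, Matrix.single_one_vecMul i A⟩
  rw [← he, hAi, map_zero]

theorem isFPCogenerator_self_iff_matrixDoubleAnnihilator :
    IsFPCogenerator R R ↔ MatrixDoubleAnnihilator R :=
  ⟨.of_modFlat modFlat_self, fun h =>
    isFPCogenerator_iff.2 fun _ _ _ _ _ hy => h.exists_apply_ne_zero hy⟩

theorem LeftKasch.isFPCogenerator (h : LeftKasch R) [Module.Injective R E] {i : R →ₗ[R] E}
    (hi : Injective i) : IsFPCogenerator R E := by
  refine isFPCogenerator_iff.2 fun N _ _ _ y hy => ?_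
  let y' : Submodule.span R {y} := ⟨y, Submodule.mem_span_singleton_self y⟩
  have hy' : Submodule.span R {y'} = ⊤ :=
    (Submodule.span_singleton_eq_top_iff _ _).2 fun ⟨_, hw⟩ =>
      let ⟨r, hr⟩ := Submodule.mem_span_singleton.1 hw
      ⟨r, Subtype.ext hr⟩
  obtain ⟨f, hf⟩ := h (Submodule.span R {y}) ⟨y', hy'⟩
    ⟨⟨y', 0, fun h0 => hy (congrArg Subtype.val h0)⟩⟩
  have hfy : f y' ≠ 0 := fun h0 => hf (LinearMap.ext_on hy' (by simpa using h0))
  obtain ⟨g, hg⟩ := Module.Injective.out (Submodule.span R {y}).subtype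
    (Submodule.subtype_injective _) (i ∘ₗ f)
  exact ⟨g, (hg y').trans_ne ((map_ne_zero_iff i hi).2 hfy)⟩

end Flat

section Essential

/-- `b` is an essential extension of `a` in the lattice `α`: `a ≤ b`, and `a` meets every nonzero
element below `b`. For submodules `N ≤ E` of a module this says that `N` is essential in `E`. -/
def IsEssentialExtension {α : Type*} [Lattice α] [OrderBot α] (a b : α) : Prop :=
  a ≤ b ∧ ∀ c ≤ b, Disjoint a c → c = ⊥

theorem IsEssentialExtension.trans {α : Type*} [Lattice α] [OrderBot α] {a b c : α}
    (hab : IsEssentialExtension a b) (hbc : IsEssentialExtension b c) :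
    IsEssentialExtension a c := by
  refine ⟨hab.1.trans hbc.1, fun d hd had => hbc.2 d hd (disjoint_iff.2 ?_)⟩
  exact hab.2 _ inf_le_left (had.mono_right inf_le_right)

variable {α : Type*} [CompleteLattice α] [IsCompactlyGenerated α]

theorem exists_maximal_isEssentialExtension (a : α) :
    ∃ b, Maximal (IsEssentialExtension a) b := by
  have h_chain (s : Set α) (hs : s ⊆ {b | IsEssentialExtension a b}) (h : IsChain (· ≤ ·) s) (b : α)
      (hb : b ∈ s) : IsEssentialExtension a (sSup s) := by
    refine ⟨(hs hb).1.trans (le_sSup hb), fun c hc hac => ?_⟩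
    rw [← inf_eq_left.2 hc, h.directedOn.inf_sSup_eq]
    exact iSup₂_eq_bot.2 fun d hd => (hs hd).2 _ inf_le_right (hac.mono_right inf_le_left)
  obtain ⟨b, -, hb⟩ := zorn_le_nonempty₀ {b | IsEssentialExtension a b}
    (fun s hs h b hb => ⟨sSup s, h_chain s hs h b hb, fun _ => le_sSup⟩) a
    ⟨le_rfl, fun c hc hac => hac.symm.eq_bot_of_le hc⟩
  exact ⟨b, hb⟩

theorem exists_maximal_disjoint (a : α) : ∃ c, Maximal (Disjoint a) c := by
  obtain ⟨c, -, hc⟩ := zorn_le_nonempty₀ {c | Disjoint a c} (fun s hs h_chain _ _ =>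
    ⟨sSup s, h_chain.directedOn.disjoint_sSup_right.2 fun c hc => hs hc, fun _ => le_sSup⟩)
    ⊥ disjoint_bot_right
  exact ⟨c, hc⟩

end Essential

section InjectiveHull

variable {R : Type u} [Ring R]

theorem IsEssentialExtension.essentialSub {M : Type u} [AddCommGroup M] [Module R M]
    {N E : Submodule R M} (h : IsEssentialExtension N E) : EssentialSub R (N.comap E.subtype) := by
  intro P hP hNP
  have h_disj : Disjoint N (P.map E.subtype) := by
    refine Submodule.disjoint_def.2 ?_
    rintro _ hxN ⟨x, hxP, rfl⟩
    exact congrArg Subtype.val (Submodule.disjoint_def.1 (disjoint_iff.2 hNP) x hxN hxP)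
  have h_bot := h.2 _ (Submodule.map_subtype_le E P) h_disj
  exact hP (eq_bot_iff.2 ((LinearMap.le_ker_iff_map.2 h_bot).trans E.ker_subtype.le))

-- The extension kills a complement `C` of `E`; by maximality of `C`, no nonzero submodule of the
-- range is disjoint from `E`.
theorem exists_extend_isEssentialExtension_range {J : Type u} [AddCommGroup J] [Module R J]
    [Module.Injective R J] (E : Submodule R J) :
    ∃ ρ : J →ₗ[R] J, (∀ x ∈ E, ρ x = x) ∧ IsEssentialExtension E (LinearMap.range ρ) := by
  obtain ⟨C, hC⟩ := exists_maximal_disjoint E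
  have h_inj : Injective (C.mkQ ∘ₗ E.subtype) := by
    rw [← LinearMap.ker_eq_bot, LinearMap.ker_comp, C.ker_mkQ,
      ← Submodule.disjoint_iff_comap_eq_bot]
    exact hC.prop
  obtain ⟨ψ, hψ⟩ := Module.Injective.out (C.mkQ ∘ₗ E.subtype) h_inj E.subtype
  let ρ := ψ ∘ₗ C.mkQ
  have hρE (x : J) (hx : x ∈ E) : ρ x = x := hψ ⟨x, hx⟩
  have hρC : C ≤ LinearMap.ker ρ := C.ker_mkQ.ge.trans (LinearMap.ker_le_ker_comp _ _)
  refine ⟨ρ, hρE, fun x hx => ⟨x, hρE x hx⟩, fun P hP hEP => ?_⟩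
  have h_disj : Disjoint E (P.comap ρ) :=
    Submodule.disjoint_def.2 fun x hx hxP =>
      Submodule.disjoint_def.1 hEP x hx (hρE x hx ▸ hxP)
  have h_le : P.comap ρ ≤ C := hC.le_of_ge h_disj (hρC.trans (LinearMap.ker_le_comap ρ))
  rw [← Submodule.map_comap_eq_self hP]
  exact LinearMap.le_ker_iff_map.1 (h_le.trans hρC)

theorem moduleInjective_of_leftInverse {J E : Type u} [AddCommGroup J] [Module R J]
    [Module.Injective R J] [AddCommGroup E] [Module R E] {i : E →ₗ[R] J} {ρ : J →ₗ[R] E}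
    (h : LeftInverse ρ i) : Module.Injective R E where
  out _ _ _ _ _ _ f hf g :=
    let ⟨k, hk⟩ := Module.Injective.out f hf (i ∘ₗ g)
    ⟨ρ ∘ₗ k, fun x => (congrArg ρ (hk x)).trans (h (g x))⟩

theorem exists_embedding_injective_module (M : Type u) [AddCommGroup M] [Module R M] :
    ∃ (J : Type u) (_ : AddCommGroup J) (_ : Module R J) (i : M →ₗ[R] J),
      Injective i ∧ Module.Injective R J := by
  let J := CategoryTheory.Injective.under (ModuleCat.of R M)
  let ι : ModuleCat.of R M ⟶ J := CategoryTheory.Injective.ι _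
  have : CategoryTheory.Injective (ModuleCat.of R J) :=
    inferInstanceAs (CategoryTheory.Injective (CategoryTheory.Injective.under _))
  exact ⟨J, inferInstance, inferInstance, ι.hom, (ModuleCat.mono_iff_injective ι).1 inferInstance,
    Module.injective_module_of_injective_object R J⟩

theorem exists_injective_isEssentialExtension {J : Type u} [AddCommGroup J] [Module R J]
    [Module.Injective R J] (N : Submodule R J) :
    ∃ E : Submodule R J, IsEssentialExtension N E ∧ Module.Injective R E := by
  obtain ⟨E, hE⟩ := exists_maximal_isEssentialExtension N
  obtain ⟨ρ, hρ, h_ess⟩ := exists_extend_isEssentialExtension_range E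
  have h_range : LinearMap.range ρ ≤ E := hE.le_of_ge (hE.prop.trans h_ess) h_ess.1
  let r : J →ₗ[R] E := ρ.codRestrict E fun x => h_range ⟨x, rfl⟩
  exact ⟨E, hE.prop,
    moduleInjective_of_leftInverse (i := E.subtype) (ρ := r) fun x => Subtype.ext (hρ x x.2)⟩

theorem exists_injectiveHull (M : Type u) [AddCommGroup M] [Module R M] :
    ∃ (E : Type u) (_ : AddCommGroup E) (_ : Module R E) (i : M →ₗ[R] E),
      Injective i ∧ Module.Injective R E ∧ EssentialSub R (LinearMap.range i) := by
  obtain ⟨J, _, _, i, hi, _⟩ := exists_embedding_injective_module (R := R) M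
  obtain ⟨E, h_ess, hE⟩ := exists_injective_isEssentialExtension (LinearMap.range i)
  exact ⟨E, inferInstance, inferInstance, i.codRestrict E fun x => h_ess.1 ⟨x, rfl⟩,
    fun x y hxy => hi (congrArg Subtype.val hxy), hE, by
      rw [LinearMap.range_codRestrict]; exact h_ess.essentialSub⟩

end InjectiveHull

/-- Proposition 2.11: characterizations of left FGF-rings among two-sided coherent rings. -/
theorem stmt_13 (R : Type u) [Ring R] (hl : LeftCoherent R) (hr : RightCoherent R) :
    List.TFAE
      [LeftFGF R,
       IsNoetherianRing R ∧ IsFPCogenerator R R,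
       IsNoetherianRing R ∧ FPInjective Rᵐᵒᵖ R,
       IsNoetherianRing R ∧ LeftKasch R ∧
         ∀ (E : Type u) [AddCommGroup E] [Module R E] (i : R →ₗ[R] E),
           Injective i → Module.Injective R E → EssentialSub R (LinearMap.range i) →
             ModFlat R E] := by
  tfae_have 1 → 2 := fun h => ⟨h.isNoetherianRing hl, h.isFPCogenerator⟩
  tfae_have 2 ↔ 3 := and_congr_right' <|
    isFPCogenerator_self_iff_matrixDoubleAnnihilator.trans
      fpInjective_op_iff_matrixDoubleAnnihilator.symm
  tfae_have 2 → 1 := fun ⟨_, h⟩ =>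
    ((isFPCogenerator_self_iff_matrixDoubleAnnihilator.1 h).leftIF hr).leftFGF
  tfae_have 1 → 4 := fun h =>
    have := h.isNoetherianRing hl
    ⟨this, h.isFPCogenerator.leftKasch, fun _ _ _ _ _ _ _ => h.modFlat_of_injective⟩
  tfae_have 4 → 2 := fun ⟨h_noeth, h_kasch, h_flat⟩ => by
    obtain ⟨E, _, _, i, hi, hE, h_ess⟩ := exists_injectiveHull (R := R) R
    exact ⟨h_noeth, isFPCogenerator_self_iff_matrixDoubleAnnihilator.2 <|
      .of_modFlat (h_flat E i hi hE h_ess) (h_kasch.isFPCogenerator hi)⟩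
  tfae_finish
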